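/- Define 𝓛(G) = l(Δ_{14}Δ_{234}/(Δ_{34}Δ_{124})) + l(Δ_{1}Δ_{24}/(Δ_{4}Δ_{12})) + l(Δ_{12}Δ_{234}/(Δ_{24}Δ_{123})) + l(Δ_{2}Δ_{34}/(Δ_{4}Δ_{23})), where Δ_I = Δ_I(G). Then for every G ∈ B_4^+, one has 𝓛(Ǧ) = 𝓛(Ĝ) = 4 − 𝓛(G). -/

import Mathlib

/-! The eight arguments of `ell` occurring in `𝓛(p) + 𝓛(p̄)`, where `p` is any positive function on
subsets of `{1,2,3,4}` satisfying the six relations `Plucker`, split into two pentagons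
(cycles with `a_{k-1} a_{k+1} = 1 + a_k`) which share one further vertex
`Z = p₁₄ p₂₃ / (p₁₂ p₃₄)`: if `A, B, C, D` are the four arguments for `p` and
`A', B', C', D'` those for `p̄`, the cycles are `B, D, D', B', Z` and `1/C, 1/A, 1/A', 1/C', Z`.
The five-term relation `pentagon` (the sum of `ell` over such a cycle is `3`) and the reflection
`ell x + ell (1/x) = 1` then cancel `ell Z` and give `𝓛(p) + 𝓛(p̄) = 4` (`eight_term`).

The analytic lemmas are proved by differentiation: the derivative of `ell` is explicit, so the
left-hand sides of reflection and pentagon are constant along a ray, and the constants are read off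
from `ell → 0` at `0` and `ell → 1` at `∞` (that is, `ζ(2) = π²/6`).

For `Ǧ` the theorem is `eight_term` with `p = Δ_I(G)`. For `Ĝ`, upper triangularity rewrites
`𝓛` in terms of upper flag minors (`Lcal_eq_flagU`): the four terms for `Ĝ` become the four terms of
`𝓛` formed from `p = Δ^J(G)`, and the same rewriting for `G` itself produces the ones formed from
the reversed `p`, so `eight_term` applies again. -/

open Matrix BigOperators

noncomputable section

/-- The dilogarithm function `Li₂`. -/
def dilog (x : ℝ) : ℝ := ∑' k : ℕ, x ^ (k + 1) / ((k : ℝ) + 1) ^ 2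

/-- The Rogers dilogarithm `L(x) = Li₂(x) + (1/2) log x log (1-x)`. -/
def rogersL (x : ℝ) : ℝ := dilog x + (1 / 2) * Real.log x * Real.log (1 - x)

/-- `l(x) = (6/π²) L(x/(1+x))`. -/
def ell (x : ℝ) : ℝ := 6 / Real.pi ^ 2 * rogersL (x / (1 + x))

/-- The minor of `M` on rows `I` and columns `J` (both taken in increasing order);
by convention it is `0` if the cardinalities disagree, and `1` for `I = J = ∅`. -/
def gminor {n : ℕ} (M : Matrix (Fin n) (Fin n) ℝ) (I J : Finset (Fin n)) : ℝ :=
  if h : J.card = I.card then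
    Matrix.det (Matrix.of fun i j : Fin I.card =>
      M (I.orderEmbOfFin rfl i) (J.orderEmbOfFin h j))
  else 0

/-- The 1-based interval `[a,b]` regarded as a finset of `Fin n`. -/
def iv (n a b : ℕ) : Finset (Fin n) :=
  Finset.univ.filter fun i => a ≤ (i : ℕ) + 1 ∧ (i : ℕ) + 1 ≤ b

/-- The last `k` columns (as a finset of `Fin n`). -/
def lastCols (n k : ℕ) : Finset (Fin n) := Finset.univ.filter fun j => n - k ≤ (j : ℕ)

/-- The first `k` rows (as a finset of `Fin n`). -/
def firstRows (n k : ℕ) : Finset (Fin n) := Finset.univ.filter fun i => (i : ℕ) < k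

/-- The right flag minor `Δ_I`: rows `I`, last `|I|` columns. -/
def flagR {n : ℕ} (M : Matrix (Fin n) (Fin n) ℝ) (I : Finset (Fin n)) : ℝ :=
  gminor M I (lastCols n I.card)

/-- The upper flag minor `Δ^J`: first `|J|` rows, columns `J`. -/
def flagU {n : ℕ} (M : Matrix (Fin n) (Fin n) ℝ) (J : Finset (Fin n)) : ℝ :=
  gminor M (firstRows n J.card) J

/-- `Ī = {n+1-a : a ∈ I}` (in 1-based labelling; `Fin.rev` in 0-based labelling). -/
def barSet {n : ℕ} (I : Finset (Fin n)) : Finset (Fin n) := I.image Fin.rev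

/-- `B_n`: invertible upper triangular real matrices. -/
def Bset (n : ℕ) : Set (Matrix (Fin n) (Fin n) ℝ) :=
  {M | M.BlockTriangular id ∧ IsUnit M.det}

/-- `N_n`: unipotent upper triangular real matrices. -/
def Nset (n : ℕ) : Set (Matrix (Fin n) (Fin n) ℝ) :=
  {M | M.BlockTriangular id ∧ ∀ i, M i i = 1}

/-- `M` is totally positive with respect to a class `S` of matrices: `M ∈ S` and every minor
that does not vanish identically on `S` is positive. -/
def totPos {n : ℕ} (S : Set (Matrix (Fin n) (Fin n) ℝ)) (M : Matrix (Fin n) (Fin n) ℝ) : Prop :=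
  M ∈ S ∧ ∀ I J : Finset (Fin n), I.card = J.card →
    (∃ A ∈ S, gminor A I J ≠ 0) → 0 < gminor M I J

/-- `B_n^+`: totally positive matrices in `B_n`. -/
def Bpos (n : ℕ) (M : Matrix (Fin n) (Fin n) ℝ) : Prop := totPos (Bset n) M

/-- `N_n^+`: totally positive matrices in `N_n`. -/
def Npos (n : ℕ) (M : Matrix (Fin n) (Fin n) ℝ) : Prop := totPos (Nset n) M

/-- The permutation matrix `P` with `P_{ij} = δ_{i+j,n+1}` (1-based). -/
def Pmat (n : ℕ) : Matrix (Fin n) (Fin n) ℝ :=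
  Matrix.of fun i j => if (i : ℕ) + (j : ℕ) + 2 = n + 1 then 1 else 0

/-- `Decomp n M M₁ M₂ D` asserts `P M P = M₁ P D M₂` with `M₁, M₂ ∈ N_n^+` and `D` diagonal;
i.e. `M₁ = M′`, `M₂ = M″`, `D = D_M`. -/
def Decomp (n : ℕ) (M M₁ M₂ D : Matrix (Fin n) (Fin n) ℝ) : Prop :=
  Npos n M₁ ∧ Npos n M₂ ∧ D.IsDiag ∧
    Pmat n * M * Pmat n = M₁ * Pmat n * D * M₂

/-- `J_k(x) = exp(x e_k) = 1 + x e_k` where `(e_k)_{ij} = δ_{ik} δ_{j,k+1}` (1-based). -/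
def Jmat (n : ℕ) (k : ℕ) (x : ℝ) : Matrix (Fin n) (Fin n) ℝ :=
  1 + Matrix.of fun (i j : Fin n) => if (i : ℕ) + 1 = k ∧ (j : ℕ) = k then x else 0

/-- The matrix `𝕁_1 ⋯ 𝕁_{n-1}` with `𝕁_k = J_k(x_{1,k+1}) ⋯ J_1(x_{k,k+1})`,
for a (1-based) coordinate function `x`. -/
def jacobiMat (n : ℕ) (x : ℕ → ℕ → ℝ) : Matrix (Fin n) (Fin n) ℝ :=
  (((List.range (n - 1)).map fun p =>
      (((List.range (p + 1)).map fun m => Jmat n (p + 1 - m) (x (m + 1) (p + 2))).prod)).prod)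

/-- `x` is the collection of Jacobi coordinates of `M`: all `x i j` (for `1 ≤ i < j ≤ n`) are
positive and `M = 𝕁_1 ⋯ 𝕁_{n-1}`. -/
def IsJacobi (n : ℕ) (M : Matrix (Fin n) (Fin n) ℝ) (x : ℕ → ℕ → ℝ) : Prop :=
  (∀ i j, 1 ≤ i → i < j → j ≤ n → 0 < x i j) ∧ M = jacobiMat n x

/-- The Y-variable `Y_{abc}(M)`. -/
def Yr (n : ℕ) (M : Matrix (Fin n) (Fin n) ℝ) (a b c : ℕ) : ℝ :=
  flagR M (iv n a (b-1) ∪ iv n (c+1) n) * flagR M (iv n (a+1) b ∪ iv n c n) /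
    (flagR M (iv n a b ∪ iv n (c+1) n) * flagR M (iv n (a+1) (b-1) ∪ iv n c n))

/-- The Y-variable `Ỹ_{abc}(M)`. -/
def Ytr (n : ℕ) (M : Matrix (Fin n) (Fin n) ℝ) (a b c : ℕ) : ℝ :=
  flagR M (iv n 1 a ∪ iv n (b+1) (c-1)) * flagR M (iv n 1 (a-1) ∪ iv n b c) /
    (flagR M (iv n 1 a ∪ iv n b (c-1)) * flagR M (iv n 1 (a-1) ∪ iv n (b+1) c))

/-- The Y-variable `Y^{abc}(M)`. -/
def Yu (n : ℕ) (M : Matrix (Fin n) (Fin n) ℝ) (a b c : ℕ) : ℝ :=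
  flagU M (iv n a b ∪ iv n (c+1) n) * flagU M (iv n (a+1) (b-1) ∪ iv n c n) /
    (flagU M (iv n a (b-1) ∪ iv n (c+1) n) * flagU M (iv n (a+1) b ∪ iv n c n))

/-- The Y-variable `Ỹ^{abc}(M)`. -/
def Ytu (n : ℕ) (M : Matrix (Fin n) (Fin n) ℝ) (a b c : ℕ) : ℝ :=
  flagU M (iv n 1 a ∪ iv n b (c-1)) * flagU M (iv n 1 (a-1) ∪ iv n (b+1) c) /
    (flagU M (iv n 1 a ∪ iv n (b+1) (c-1)) * flagU M (iv n 1 (a-1) ∪ iv n b c))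

/-- The discrete tetrahedron `T_n = {(a,b,c) : 1 ≤ a < b < c ≤ n}`. -/
def Tset (n : ℕ) : Finset (ℕ × ℕ × ℕ) :=
  ((Finset.range (n+1)) ×ˢ (Finset.range (n+1)) ×ˢ (Finset.range (n+1))).filter
    fun t => 1 ≤ t.1 ∧ t.1 < t.2.1 ∧ t.2.1 < t.2.2 ∧ t.2.2 ≤ n


/-- The function `𝓛(G)` of (2.7) (indices written 0-based: e.g. `Δ_{14} = flagR G {0,3}`). -/
def Lcal (G : Matrix (Fin 4) (Fin 4) ℝ) : ℝ :=
  ell (flagR G {0, 3} * flagR G {1, 2, 3} / (flagR G {2, 3} * flagR G {0, 1, 3})) +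
    ell (flagR G {0} * flagR G {1, 3} / (flagR G {3} * flagR G {0, 1})) +
    ell (flagR G {0, 1} * flagR G {1, 2, 3} / (flagR G {1, 3} * flagR G {0, 1, 2})) +
    ell (flagR G {1} * flagR G {2, 3} / (flagR G {3} * flagR G {1, 2}))

open Set Filter Topology

/-! ### Analysis of the Rogers dilogarithm -/

lemma dilog_zero : dilog 0 = 0 := by
  simp [dilog]

lemma dilog_one : dilog 1 = Real.pi ^ 2 / 6 := by
  have h := hasSum_zeta_two
  rw [← hasSum_nat_add_iff' 1] at h
  simp only [Finset.range_one, Finset.sum_singleton, Nat.cast_zero] at h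
  have := h.tsum_eq
  norm_num at this
  simpa [dilog] using this

lemma continuousOn_dilog : ContinuousOn dilog (Icc 0 1) := by
  have hs : Summable fun k : ℕ => 1 / ((k : ℝ) + 1) ^ 2 := by
    have := (summable_nat_add_iff 1).2 (hasSum_zeta_two.summable)
    simpa using this
  refine continuousOn_tsum (u := fun k : ℕ => 1 / ((k : ℝ) + 1) ^ 2) ?_ hs ?_
  · intro k; fun_prop
  · intro k x hx
    rw [Real.norm_eq_abs, abs_of_nonneg (by have := hx.1; positivity)]
    gcongr
    exact pow_le_one₀ hx.1 hx.2

lemma hasDerivAt_dilog {x : ℝ} (hx : x ∈ Ioo (0 : ℝ) 1) :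
    HasDerivAt dilog (-Real.log (1 - x) / x) x := by
  obtain ⟨r, hxr, hr⟩ := exists_between hx.2
  have hr0 : 0 < r := hx.1.trans hxr
  have key : HasDerivAt (fun z : ℝ => ∑' k : ℕ, z ^ (k + 1) / ((k : ℝ) + 1) ^ 2)
      (∑' k : ℕ, x ^ k / ((k : ℝ) + 1)) x := by
    refine hasDerivAt_tsum_of_isPreconnected (u := fun k : ℕ => r ^ k) (t := Ioo 0 r)
      (g' := fun (k : ℕ) (y : ℝ) => y ^ k / ((k : ℝ) + 1)) (y₀ := x)
      (summable_geometric_of_lt_one hr0.le hr) isOpen_Ioo isPreconnected_Ioo ?_ ?_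
      ⟨hx.1, hxr⟩ ?_ ⟨hx.1, hxr⟩
    · intro k y _
      have := (hasDerivAt_pow (k + 1) y).div_const (((k : ℝ) + 1) ^ 2)
      refine this.congr_deriv ?_
      have : (k : ℝ) + 1 ≠ 0 := by positivity
      rw [Nat.add_sub_cancel]
      push_cast
      field_simp
    · intro k y hy
      have hy0 := hy.1
      rw [Real.norm_eq_abs, abs_of_nonneg (by positivity)]
      calc y ^ k / ((k : ℝ) + 1) ≤ y ^ k / 1 := by
            gcongr
            have : (0 : ℝ) ≤ k := by positivity
            linarith
        _ ≤ r ^ k := by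
            rw [div_one]
            exact pow_le_pow_left₀ hy.1.le hy.2.le k
    · refine Summable.of_nonneg_of_le (fun k => ?_) (fun k => ?_)
        ((summable_geometric_of_lt_one hx.1.le hx.2).mul_right x)
      · have := hx.1; positivity
      · have h0 := hx.1
        rw [← pow_succ]
        apply div_le_self (by positivity)
        apply one_le_pow₀
        have : (0 : ℝ) ≤ k := by positivity
        linarith
  have hlog := Real.hasSum_pow_div_log_of_abs_lt_one (x := x)
    (by rw [abs_lt]; constructor <;> linarith [hx.1, hx.2])
  have h2 := hlog.div_const x
  have hx0 : x ≠ 0 := hx.1.ne'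
  have h3 : (fun k : ℕ => x ^ (k + 1) / ((k : ℝ) + 1) / x) = fun k : ℕ => x ^ k / ((k : ℝ) + 1) := by
    funext k
    rw [pow_succ]
    field_simp
  rw [h3] at h2
  rw [h2.tsum_eq] at key
  exact key

lemma tendsto_log_mul_log :
    Tendsto (fun z : ℝ => Real.log z * Real.log (1 - z)) (𝓝[>] 0) (𝓝 0) := by
  have h1 : Tendsto (fun z : ℝ => Real.log z * z) (𝓝[>] 0) (𝓝 0) :=
    by simpa only [Real.rpow_one] using tendsto_log_mul_rpow_nhdsGT_zero zero_lt_one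
  have hd : HasDerivAt (fun z : ℝ => Real.log (1 - z)) (-1) 0 := by
    have := ((hasDerivAt_id (0 : ℝ)).const_sub 1).log (by simp)
    simpa using this
  have h2 := hd.tendsto_slope_zero_right
  have h3 := h1.mul h2
  simp only [zero_mul] at h3
  refine h3.congr' ?_
  filter_upwards [self_mem_nhdsWithin] with z hz
  have hz' : z ≠ 0 := ne_of_gt hz
  simp only [zero_add, sub_zero, Real.log_one, smul_eq_mul]
  field_simp

lemma tendsto_rogersL_zero : Tendsto rogersL (𝓝[>] 0) (𝓝 0) := by
  have h1 : Tendsto dilog (𝓝[>] 0) (𝓝 0) := by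
    have := (continuousOn_dilog 0 (by simp)).tendsto
    rw [dilog_zero] at this
    rw [← nhdsWithin_Ioo_eq_nhdsGT (zero_lt_one (α := ℝ))]
    exact this.mono_left (nhdsWithin_mono _ Ioo_subset_Icc_self)
  have := h1.add (tendsto_log_mul_log.const_mul (1 / 2))
  rw [mul_zero, add_zero] at this
  refine this.congr fun z => ?_
  rw [rogersL]
  ring

lemma tendsto_rogersL_one : Tendsto rogersL (𝓝[<] 1) (𝓝 (Real.pi ^ 2 / 6)) := by
  have h1 : Tendsto dilog (𝓝[<] 1) (𝓝 (Real.pi ^ 2 / 6)) := by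
    have := (continuousOn_dilog 1 (by simp)).tendsto
    rw [dilog_one] at this
    rw [← nhdsWithin_Ioo_eq_nhdsLT (zero_lt_one (α := ℝ))]
    exact this.mono_left (nhdsWithin_mono _ Ioo_subset_Icc_self)
  have hr : Tendsto (fun z : ℝ => 1 - z) (𝓝[<] 1) (𝓝[>] 0) := by
    refine tendsto_nhdsWithin_iff.2 ⟨?_, ?_⟩
    · have : Tendsto (fun z : ℝ => 1 - z) (𝓝 1) (𝓝 (1 - 1)) :=
        (continuous_const.sub continuous_id).tendsto 1
      rw [sub_self] at this
      exact this.mono_left nhdsWithin_le_nhds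
    · filter_upwards [self_mem_nhdsWithin] with z hz
      exact sub_pos.2 (mem_Iio.1 hz)
  have := h1.add ((tendsto_log_mul_log.comp hr).const_mul (1 / 2))
  simp only [Function.comp_def, sub_sub_cancel, mul_zero, add_zero] at this
  refine this.congr fun z => ?_
  simp only [rogersL]
  ring

lemma tendsto_ell_zero : Tendsto ell (𝓝[>] 0) (𝓝 0) := by
  have hm : Tendsto (fun x : ℝ => x / (1 + x)) (𝓝[>] 0) (𝓝[>] 0) := by
    refine tendsto_nhdsWithin_iff.2 ⟨?_, ?_⟩
    · have : ContinuousAt (fun x : ℝ => x / (1 + x)) 0 := by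
        apply ContinuousAt.div <;> first | fun_prop | norm_num
      have := this.tendsto
      simp only [zero_div] at this
      exact this.mono_left nhdsWithin_le_nhds
    · filter_upwards [self_mem_nhdsWithin] with x hx
      have hx : 0 < x := hx
      exact div_pos hx (by linarith)
  have := (tendsto_rogersL_zero.comp hm).const_mul (6 / Real.pi ^ 2)
  rw [mul_zero] at this
  exact this

lemma tendsto_ell_atTop : Tendsto ell atTop (𝓝 1) := by
  have hm : Tendsto (fun x : ℝ => x / (1 + x)) atTop (𝓝[<] 1) := by
    refine tendsto_nhdsWithin_iff.2 ⟨?_, ?_⟩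
    · have h : Tendsto (fun x : ℝ => 1 - (1 + x)⁻¹) atTop (𝓝 (1 - 0)) :=
        (tendsto_inv_atTop_zero.comp (tendsto_atTop_add_const_left _ 1 tendsto_id)).const_sub 1
      rw [sub_zero] at h
      refine h.congr' ?_
      filter_upwards [eventually_gt_atTop 0] with x hx
      have : 1 + x ≠ 0 := by positivity
      field_simp
      ring
    · filter_upwards [eventually_gt_atTop 0] with x hx
      have : 0 < 1 + x := by positivity
      rw [mem_Iio, div_lt_one this]
      linarith
  have := (tendsto_rogersL_one.comp hm).const_mul (6 / Real.pi ^ 2)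
  have hp : Real.pi ≠ 0 := Real.pi_ne_zero
  have e : 6 / Real.pi ^ 2 * (Real.pi ^ 2 / 6) = 1 := by field_simp
  rw [e] at this
  exact this

/-- The derivative of `ell`. -/
def dell (x : ℝ) : ℝ := 3 / Real.pi ^ 2 * (Real.log (1 + x) / x - Real.log x / (1 + x))

lemma hasDerivAt_ell {x : ℝ} (hx : 0 < x) : HasDerivAt ell (dell x) x := by
  have h1x : 0 < 1 + x := by positivity
  have hz : x / (1 + x) ∈ Ioo (0 : ℝ) 1 :=
    ⟨by positivity, by rw [div_lt_one h1x]; linarith⟩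
  have hm : HasDerivAt (fun x : ℝ => x / (1 + x)) (1 / (1 + x) ^ 2) x := by
    have := (hasDerivAt_id x).div ((hasDerivAt_id x).const_add 1) h1x.ne'
    refine this.congr_deriv ?_
    simp only [id_eq]
    ring
  have e1 : 1 - x / (1 + x) = 1 / (1 + x) := by field_simp; ring
  have hL : HasDerivAt rogersL (-Real.log (1 - x / (1 + x)) / (x / (1 + x)) +
      ((1 / 2) * (1 / (x / (1 + x))) * Real.log (1 - x / (1 + x)) +
        (1 / 2) * Real.log (x / (1 + x)) * (-1 / (1 - x / (1 + x))))) (x / (1 + x)) := by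
    have a := (hasDerivAt_id (x / (1 + x))).log hz.1.ne'
    have b := ((hasDerivAt_id (x / (1 + x))).const_sub 1).log (sub_pos.2 hz.2).ne'
    exact (hasDerivAt_dilog hz).add ((a.const_mul (1 / 2)).mul b)
  have := (hL.comp x hm).const_mul (6 / Real.pi ^ 2)
  refine this.congr_deriv ?_
  rw [e1, Real.log_div hx.ne' h1x.ne', Real.log_div one_ne_zero h1x.ne', Real.log_one, dell]
  have hp : Real.pi ≠ 0 := Real.pi_ne_zero
  field_simp
  ring

/-- A function on `(0, ∞)` with zero derivative equals its limit at `0`. -/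
lemma eq_of_deriv_zero {f : ℝ → ℝ} {c x : ℝ} (hf : ∀ t, 0 < t → HasDerivAt f 0 t)
    (hl : Tendsto f (𝓝[>] 0) (𝓝 c)) (hx : 0 < x) : f x = c := by
  have hc : ∀ t ∈ Ioi (0 : ℝ), f t = f x := fun t ht =>
    (isOpen_Ioi.is_const_of_deriv_eq_zero isPreconnected_Ioi
      (fun s hs => (hf s hs).differentiableAt.differentiableWithinAt)
      (fun s hs => (hf s hs).deriv) ht hx)
  refine tendsto_nhds_unique (tendsto_const_nhds.congr' ?_) hl
  filter_upwards [self_mem_nhdsWithin] with t ht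
  exact (hc t ht).symm

lemma ell_add_ell_inv {x : ℝ} (hx : 0 < x) : ell x + ell (1 / x) = 1 := by
  refine eq_of_deriv_zero (f := fun t => ell t + ell (1 / t)) ?_ ?_ hx
  · intro t ht
    have hi : HasDerivAt (fun t : ℝ => 1 / t) (-(t ^ 2)⁻¹) t := by
      simpa using hasDerivAt_inv ht.ne'
    have := (hasDerivAt_ell ht).add ((hasDerivAt_ell (one_div_pos.2 ht)).comp t hi)
    refine this.congr_deriv ?_
    have e : 1 + 1 / t = (1 + t) / t := by field_simp; ring
    have h1t : 1 + t ≠ 0 := by positivity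
    rw [dell, dell, e, Real.log_div h1t ht.ne', one_div, Real.log_inv]
    have hp : Real.pi ≠ 0 := Real.pi_ne_zero
    field_simp
    ring
  · have : Tendsto (fun t : ℝ => ell (1 / t)) (𝓝[>] 0) (𝓝 1) := by
      refine tendsto_ell_atTop.comp ?_
      exact tendsto_inv_nhdsGT_zero.congr fun t => (one_div t).symm
    simpa using tendsto_ell_zero.add this

lemma pentagon_aux {x y : ℝ} (hx : 0 < x) (hy : 0 < y) :
    ell x + ell y + ell ((1 + y) / x) + ell ((1 + x + y) / (x * y)) + ell ((1 + x) / y) = 3 := by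
  refine eq_of_deriv_zero (f := fun x => ell x + ell y + ell ((1 + y) / x) +
    ell ((1 + x + y) / (x * y)) + ell ((1 + x) / y)) ?_ ?_ hx
  · intro t ht
    have h1t : 0 < 1 + t := by positivity
    have h1y : 0 < 1 + y := by positivity
    have h1ty : 0 < 1 + t + y := by positivity
    have d3 : HasDerivAt (fun x : ℝ => (1 + y) / x) (-(1 + y) / t ^ 2) t := by
      have := (hasDerivAt_const t (1 + y)).div (hasDerivAt_id t) ht.ne'
      refine this.congr_deriv ?_
      simp
    have d4 : HasDerivAt (fun x : ℝ => (1 + x + y) / (x * y)) (-(1 + y) / (t ^ 2 * y)) t := by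
      have := (((hasDerivAt_id t).const_add 1).add_const y).div
        ((hasDerivAt_id t).mul_const y) (mul_pos ht hy).ne'
      refine this.congr_deriv ?_
      simp only [id_eq]
      field_simp
      ring
    have d5 : HasDerivAt (fun x : ℝ => (1 + x) / y) (1 / y) t :=
      ((hasDerivAt_id t).const_add 1).div_const y
    have p3 : 0 < (1 + y) / t := by positivity
    have p4 : 0 < (1 + t + y) / (t * y) := by positivity
    have p5 : 0 < (1 + t) / y := by positivity
    have := ((((hasDerivAt_ell ht).add_const (ell y)).add
      ((hasDerivAt_ell p3).comp t d3)).add ((hasDerivAt_ell p4).comp t d4)).add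
      ((hasDerivAt_ell p5).comp t d5)
    refine this.congr_deriv ?_
    have e3 : 1 + (1 + y) / t = (1 + t + y) / t := by field_simp; ring
    have e4 : 1 + (1 + t + y) / (t * y) = (1 + t) * (1 + y) / (t * y) := by field_simp; ring
    have e5 : 1 + (1 + t) / y = (1 + t + y) / y := by field_simp; ring
    simp only [dell]
    rw [e3, e4, e5, Real.log_div h1ty.ne' ht.ne', Real.log_div h1y.ne' ht.ne',
      Real.log_div (mul_pos h1t h1y).ne' (mul_pos ht hy).ne',
      Real.log_div h1ty.ne' (mul_pos ht hy).ne', Real.log_div h1ty.ne' hy.ne',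
      Real.log_div h1t.ne' hy.ne', Real.log_mul h1t.ne' h1y.ne', Real.log_mul ht.ne' hy.ne']
    have hp : Real.pi ≠ 0 := Real.pi_ne_zero
    field_simp
    ring
  · have ti : Tendsto (fun t : ℝ => t⁻¹) (𝓝[>] 0) atTop := tendsto_inv_nhdsGT_zero
    have l3 : Tendsto (fun t : ℝ => ell ((1 + y) / t)) (𝓝[>] 0) (𝓝 1) := by
      refine tendsto_ell_atTop.comp ?_
      exact (ti.const_mul_atTop (by positivity : 0 < 1 + y)).congr fun t =>
        (div_eq_mul_inv _ _).symm
    have l4 : Tendsto (fun t : ℝ => ell ((1 + t + y) / (t * y))) (𝓝[>] 0) (𝓝 1) := by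
      refine tendsto_ell_atTop.comp ?_
      have : Tendsto (fun t : ℝ => (1 + y) / y * t⁻¹ + 1 / y) (𝓝[>] 0) atTop :=
        tendsto_atTop_add_const_right _ _ (ti.const_mul_atTop (by positivity))
      refine this.congr' ?_
      filter_upwards [self_mem_nhdsWithin] with t ht
      have ht : t ≠ 0 := ne_of_gt ht
      field_simp
      ring
    have l5 : Tendsto (fun t : ℝ => ell ((1 + t) / y)) (𝓝[>] 0) (𝓝 (ell (1 / y))) := by
      have hc : ContinuousAt ell (1 / y) := (hasDerivAt_ell (one_div_pos.2 hy)).continuousAt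
      have hg : Tendsto (fun t : ℝ => (1 + t) / y) (𝓝 0) (𝓝 ((1 + 0) / y)) :=
        ((continuous_const.add continuous_id).div_const y).tendsto 0
      rw [add_zero] at hg
      exact (hc.tendsto.comp hg).mono_left nhdsWithin_le_nhds
    have := (((tendsto_ell_zero.add_const (ell y)).add l3).add l4).add l5
    convert this using 2
    have := ell_add_ell_inv hy
    linarith

/-- The five-term relation, for a positive cycle with `a_{k-1} a_{k+1} = 1 + a_k`. Three of the
five cycle equations imply the other two. -/
lemma pentagon {a b c d e : ℝ} (ha : 0 < a) (hb : 0 < b) (h1 : a * c = 1 + b)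
    (h2 : b * d = 1 + c) (h3 : b * e = 1 + a) :
    ell a + ell b + ell c + ell d + ell e = 3 := by
  have hc : c = (1 + b) / a := by field_simp; linarith
  have hd : d = (1 + a + b) / (a * b) := by
    subst hc
    field_simp
    field_simp at h2
    linarith
  have he : e = (1 + a) / b := by field_simp; linarith
  rw [hc, hd, he]
  exact pentagon_aux ha hb

/-! ### The eight-term identity -/

/-- The expression defining `𝓛`, formed from an arbitrary function `p` of subsets. -/
def Lform (p : Finset (Fin 4) → ℝ) : ℝ :=
  ell (p {0, 3} * p {1, 2, 3} / (p {2, 3} * p {0, 1, 3})) +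
    ell (p {0} * p {1, 3} / (p {3} * p {0, 1})) +
    ell (p {0, 1} * p {1, 2, 3} / (p {1, 3} * p {0, 1, 2})) +
    ell (p {1} * p {2, 3} / (p {3} * p {1, 2}))

/-- `Lform` of the reversed function `I ↦ p Ī`, written out. -/
def LformBar (p : Finset (Fin 4) → ℝ) : ℝ :=
  ell (p {0, 3} * p {0, 1, 2} / (p {0, 1} * p {0, 2, 3})) +
    ell (p {3} * p {0, 2} / (p {0} * p {2, 3})) +
    ell (p {2, 3} * p {0, 1, 2} / (p {0, 2} * p {1, 2, 3})) +
    ell (p {2} * p {0, 1} / (p {0} * p {1, 2}))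

/-- The six three-term Plücker relations used in the eight-term identity. -/
structure Plucker (p : Finset (Fin 4) → ℝ) : Prop where
  r1 : p {2} * p {1, 3} = p {3} * p {1, 2} + p {1} * p {2, 3}
  r2 : p {1} * p {0, 2} = p {0} * p {1, 2} + p {2} * p {0, 1}
  r3 : p {1, 3} * p {0, 2, 3} = p {2, 3} * p {0, 1, 3} + p {0, 3} * p {1, 2, 3}
  r4 : p {0, 2} * p {0, 1, 3} = p {0, 1} * p {0, 2, 3} + p {0, 3} * p {0, 1, 2}
  r5 : p {1} * p {0, 3} = p {3} * p {0, 1} + p {0} * p {1, 3}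
  r6 : p {0, 1, 3} * p {1, 2} = p {1, 3} * p {0, 1, 2} + p {0, 1} * p {1, 2, 3}

/-- `p` is positive on all nonempty proper subsets. -/
def PosFlag (p : Finset (Fin 4) → ℝ) : Prop :=
  (0 < p {0} ∧ 0 < p {1} ∧ 0 < p {2} ∧ 0 < p {3}) ∧
  (0 < p {0, 1} ∧ 0 < p {0, 2} ∧ 0 < p {0, 3} ∧ 0 < p {1, 2} ∧ 0 < p {1, 3} ∧ 0 < p {2, 3}) ∧
  (0 < p {0, 1, 2} ∧ 0 < p {0, 1, 3} ∧ 0 < p {0, 2, 3} ∧ 0 < p {1, 2, 3})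

lemma eight_term {p : Finset (Fin 4) → ℝ} (hpos : PosFlag p) (hp : Plucker p) :
    Lform p + LformBar p = 4 := by
  obtain ⟨⟨h0, h1, h2, h3⟩, ⟨h01, h02, h03, h12, h13, h23⟩, ⟨h012, h013, h023, h123⟩⟩ := hpos
  obtain ⟨r1, r2, r3, r4, r5, r6⟩ := hp
  unfold Lform LformBar
  generalize p {0} = p0 at *
  generalize p {1} = p1 at *
  generalize p {2} = p2 at *
  generalize p {3} = p3 at *
  generalize p {0, 1} = p01 at *
  generalize p {0, 2} = p02 at *
  generalize p {0, 3} = p03 at *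
  generalize p {1, 2} = p12 at *
  generalize p {1, 3} = p13 at *
  generalize p {2, 3} = p23 at *
  generalize p {0, 1, 2} = p012 at *
  generalize p {0, 1, 3} = p013 at *
  generalize p {0, 2, 3} = p023 at *
  generalize p {1, 2, 3} = p123 at *
  have P1 := pentagon (a := p0 * p13 / (p3 * p01)) (b := p1 * p23 / (p3 * p12))
    (c := p2 * p01 / (p0 * p12)) (d := p3 * p02 / (p0 * p23)) (e := p03 * p12 / (p01 * p23))
    (by positivity) (by positivity) (by field_simp; linarith) (by field_simp; linarith)
    (by field_simp; linarith)
  have P2 := pentagon (a := 1 / (p01 * p123 / (p13 * p012)))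
    (b := 1 / (p03 * p123 / (p23 * p013))) (c := 1 / (p03 * p012 / (p01 * p023)))
    (d := 1 / (p23 * p012 / (p02 * p123))) (e := p03 * p12 / (p01 * p23))
    (by positivity) (by positivity) (by field_simp; linarith) (by field_simp; linarith)
    (by field_simp; linarith)
  have i1 := ell_add_ell_inv (x := p01 * p123 / (p13 * p012)) (by positivity)
  have i2 := ell_add_ell_inv (x := p03 * p123 / (p23 * p013)) (by positivity)
  have i3 := ell_add_ell_inv (x := p03 * p012 / (p01 * p023)) (by positivity)
  have i4 := ell_add_ell_inv (x := p23 * p012 / (p02 * p123)) (by positivity)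
  linarith

/-! ### Flag minors of 4×4 matrices -/

/-- A minor evaluated through explicit increasing enumerations of its rows and columns. -/
lemma gminor_eq {n k : ℕ} (M : Matrix (Fin n) (Fin n) ℝ) {I J : Finset (Fin n)}
    (f g : Fin k → Fin n) (hI : I.card = k) (hJ : J.card = k)
    (hf : ∀ i, f i ∈ I) (hg : ∀ i, g i ∈ J) (hfm : StrictMono f) (hgm : StrictMono g) :
    gminor M I J = (M.submatrix f g).det := by
  subst hI
  have e1 := Finset.orderEmbOfFin_unique rfl hf hfm
  have e2 := Finset.orderEmbOfFin_unique hJ hg hgm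
  rw [gminor, dif_pos hJ]
  congr 1
  ext i j
  simp [e1, e2]

lemma gminor_one (M : Matrix (Fin 4) (Fin 4) ℝ) (a b : Fin 4) :
    gminor M {a} {b} = M a b := by
  rw [gminor_eq M ![a] ![b] (by simp) (by simp) (by simp) (by simp)
    (Subsingleton.strictMono _) (Subsingleton.strictMono _)]
  simp only [Matrix.det_fin_one, Matrix.submatrix_apply]
  rfl

lemma gminor_two (M : Matrix (Fin 4) (Fin 4) ℝ) (a b c d : Fin 4) (h : a < b) (h' : c < d) :
    gminor M {a, b} {c, d} = M a c * M b d - M a d * M b c := by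
  rw [gminor_eq M ![a, b] ![c, d] (Finset.card_pair h.ne) (Finset.card_pair h'.ne)
    (by intro i; fin_cases i <;> simp) (by intro i; fin_cases i <;> simp)
    (by simpa [Fin.strictMono_iff_lt_succ] using h)
    (by simpa [Fin.strictMono_iff_lt_succ] using h')]
  simp only [Matrix.det_fin_two, Matrix.submatrix_apply]
  rfl

lemma gminor_three (M : Matrix (Fin 4) (Fin 4) ℝ) (a b c d e f : Fin 4) (h : a < b) (h2 : b < c)
    (h' : d < e) (h2' : e < f) :
    gminor M {a, b, c} {d, e, f} =
      M a d * M b e * M c f - M a d * M b f * M c e - M a e * M b d * M c f +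
        M a e * M b f * M c d + M a f * M b d * M c e - M a f * M b e * M c d := by
  rw [gminor_eq M ![a, b, c] ![d, e, f]
    (Finset.card_eq_three.2 ⟨a, b, c, h.ne, (h.trans h2).ne, h2.ne, rfl⟩)
    (Finset.card_eq_three.2 ⟨d, e, f, h'.ne, (h'.trans h2').ne, h2'.ne, rfl⟩)
    (by intro i; fin_cases i <;> simp) (by intro i; fin_cases i <;> simp)
    (by simp [Fin.strictMono_iff_lt_succ, Fin.forall_fin_two, h, h2])
    (by simp [Fin.strictMono_iff_lt_succ, Fin.forall_fin_two, h', h2'])]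
  simp only [Matrix.det_fin_three, Matrix.submatrix_apply]
  rfl

lemma flagR_one (M : Matrix (Fin 4) (Fin 4) ℝ) (a : Fin 4) : flagR M {a} = M a 3 := by
  rw [flagR, Finset.card_singleton, show lastCols 4 1 = {3} by decide, gminor_one]

lemma flagR_two (M : Matrix (Fin 4) (Fin 4) ℝ) (a b : Fin 4) (h : a < b) :
    flagR M {a, b} = M a 2 * M b 3 - M a 3 * M b 2 := by
  rw [flagR, Finset.card_pair h.ne, show lastCols 4 2 = {2, 3} by decide,
    gminor_two M _ _ _ _ h (by decide)]

lemma flagR_three (M : Matrix (Fin 4) (Fin 4) ℝ) (a b c : Fin 4) (h : a < b) (h2 : b < c) :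
    flagR M {a, b, c} =
      M a 1 * M b 2 * M c 3 - M a 1 * M b 3 * M c 2 - M a 2 * M b 1 * M c 3 +
        M a 2 * M b 3 * M c 1 + M a 3 * M b 1 * M c 2 - M a 3 * M b 2 * M c 1 := by
  rw [flagR, Finset.card_eq_three.2 ⟨a, b, c, h.ne, (h.trans h2).ne, h2.ne, rfl⟩,
    show lastCols 4 3 = {1, 2, 3} by decide, gminor_three M _ _ _ _ _ _ h h2 (by decide) (by decide)]

lemma flagU_one (M : Matrix (Fin 4) (Fin 4) ℝ) (a : Fin 4) : flagU M {a} = M 0 a := by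
  rw [flagU, Finset.card_singleton, show firstRows 4 1 = {0} by decide, gminor_one]

lemma flagU_two (M : Matrix (Fin 4) (Fin 4) ℝ) (a b : Fin 4) (h : a < b) :
    flagU M {a, b} = M 0 a * M 1 b - M 0 b * M 1 a := by
  rw [flagU, Finset.card_pair h.ne, show firstRows 4 2 = {0, 1} by decide,
    gminor_two M _ _ _ _ (by decide) h]

lemma flagU_three (M : Matrix (Fin 4) (Fin 4) ℝ) (a b c : Fin 4) (h : a < b) (h2 : b < c) :
    flagU M {a, b, c} =
      M 0 a * M 1 b * M 2 c - M 0 a * M 1 c * M 2 b - M 0 b * M 1 a * M 2 c +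
        M 0 b * M 1 c * M 2 a + M 0 c * M 1 a * M 2 b - M 0 c * M 1 b * M 2 a := by
  rw [flagU, Finset.card_eq_three.2 ⟨a, b, c, h.ne, (h.trans h2).ne, h2.ne, rfl⟩,
    show firstRows 4 3 = {0, 1, 2} by decide, gminor_three M _ _ _ _ _ _ (by decide) (by decide) h h2]

lemma plucker_flagR (M : Matrix (Fin 4) (Fin 4) ℝ) : Plucker (flagR M) := by
  constructor <;>
  · simp only [flagR_one, flagR_two, flagR_three, Fin.reduceLT]
    ring

lemma plucker_flagU (M : Matrix (Fin 4) (Fin 4) ℝ) : Plucker (flagU M) := by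
  constructor <;>
  · simp only [flagU_one, flagU_two, flagU_three, Fin.reduceLT]
    ring

/-- The upper triangular Pascal matrix. All of its flag minors are nonzero, so none of them vanishes
identically on `B_4`. -/
def pascal : Matrix (Fin 4) (Fin 4) ℝ := !![1, 1, 1, 1; 0, 1, 2, 3; 0, 0, 1, 3; 0, 0, 0, 1]

lemma pascal_mem : pascal ∈ Bset 4 := by
  have ht : pascal.BlockTriangular id := by
    intro i j hij
    fin_cases i <;> fin_cases j <;> first | (exfalso; revert hij; decide) | rfl
  refine ⟨ht, ?_⟩
  rw [Matrix.det_of_isUpperTriangular ht]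
  simp [Fin.prod_univ_four, pascal]

lemma card_lastCols (I : Finset (Fin 4)) : I.card = (lastCols 4 I.card).card := by
  revert I; decide

lemma card_firstRows (J : Finset (Fin 4)) : (firstRows 4 J.card).card = J.card := by
  revert J; decide

lemma flagR_pos {M : Matrix (Fin 4) (Fin 4) ℝ} (hM : Bpos 4 M) (I : Finset (Fin 4))
    (h : flagR pascal I ≠ 0) : 0 < flagR M I :=
  hM.2 I _ (card_lastCols I) ⟨pascal, pascal_mem, h⟩

lemma flagU_pos {M : Matrix (Fin 4) (Fin 4) ℝ} (hM : Bpos 4 M) (J : Finset (Fin 4))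
    (h : flagU pascal J ≠ 0) : 0 < flagU M J :=
  hM.2 _ J (card_firstRows J) ⟨pascal, pascal_mem, h⟩

lemma posFlag_flagR {M : Matrix (Fin 4) (Fin 4) ℝ} (hM : Bpos 4 M) : PosFlag (flagR M) := by
  refine ⟨⟨?_, ?_, ?_, ?_⟩, ⟨?_, ?_, ?_, ?_, ?_, ?_⟩, ⟨?_, ?_, ?_, ?_⟩⟩ <;>
  · apply flagR_pos hM
    simp only [flagR_one, flagR_two, flagR_three, Fin.reduceLT]
    simp [pascal]
    try norm_num

lemma posFlag_flagU {M : Matrix (Fin 4) (Fin 4) ℝ} (hM : Bpos 4 M) : PosFlag (flagU M) := by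
  refine ⟨⟨?_, ?_, ?_, ?_⟩, ⟨?_, ?_, ?_, ?_, ?_, ?_⟩, ⟨?_, ?_, ?_, ?_⟩⟩ <;>
  · apply flagU_pos hM
    simp only [flagU_one, flagU_two, flagU_three, Fin.reduceLT]
    simp [pascal]
    try norm_num

/-! ### The two matrices `Ǧ` and `Ĝ` -/

set_option linter.unusedSimpArgs false in
/-- On totally positive upper triangular matrices, `𝓛` in terms of upper flag minors: the terms of
`LformBar` appear, in the order `4, 2, 3, 1`, because each right flag minor occurring in `𝓛`
equals, up to a product of diagonal entries, an upper flag minor. -/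
lemma Lcal_eq_flagU {M : Matrix (Fin 4) (Fin 4) ℝ} (hM : Bpos 4 M) :
    Lcal M = LformBar (flagU M) := by
  obtain ⟨⟨R0, R1, R2, R3⟩, ⟨R01, R02, R03, R12, R13, R23⟩, ⟨R012, R013, R023, R123⟩⟩ :=
    posFlag_flagR hM
  obtain ⟨⟨U0, U1, U2, U3⟩, ⟨U01, U02, U03, U12, U13, U23⟩, ⟨U012, U013, U023, U123⟩⟩ :=
    posFlag_flagU hM
  have z10 : M 1 0 = 0 := hM.1.1 (by decide)
  have z20 : M 2 0 = 0 := hM.1.1 (by decide)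
  have z21 : M 2 1 = 0 := hM.1.1 (by decide)
  have z30 : M 3 0 = 0 := hM.1.1 (by decide)
  have z31 : M 3 1 = 0 := hM.1.1 (by decide)
  have z32 : M 3 2 = 0 := hM.1.1 (by decide)
  have t1 : flagR M {0, 3} * flagR M {1, 2, 3} / (flagR M {2, 3} * flagR M {0, 1, 3}) =
      flagU M {2} * flagU M {0, 1} / (flagU M {0} * flagU M {1, 2}) := by
    rw [div_eq_div_iff (by positivity) (by positivity)]
    simp only [flagR_one, flagR_two, flagR_three, flagU_one, flagU_two, flagU_three, Fin.reduceLT,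
      z10, z20, z21, z30, z31, z32]
    ring
  have t2 : flagR M {0} * flagR M {1, 3} / (flagR M {3} * flagR M {0, 1}) =
      flagU M {3} * flagU M {0, 2} / (flagU M {0} * flagU M {2, 3}) := by
    rw [div_eq_div_iff (by positivity) (by positivity)]
    simp only [flagR_one, flagR_two, flagR_three, flagU_one, flagU_two, flagU_three, Fin.reduceLT,
      z10, z20, z21, z30, z31, z32]
    ring
  have t3 : flagR M {0, 1} * flagR M {1, 2, 3} / (flagR M {1, 3} * flagR M {0, 1, 2}) =
      flagU M {2, 3} * flagU M {0, 1, 2} / (flagU M {0, 2} * flagU M {1, 2, 3}) := by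
    rw [div_eq_div_iff (by positivity) (by positivity)]
    simp only [flagR_one, flagR_two, flagR_three, flagU_one, flagU_two, flagU_three, Fin.reduceLT,
      z10, z20, z21, z30, z31, z32]
    ring
  have t4 : flagR M {1} * flagR M {2, 3} / (flagR M {3} * flagR M {1, 2}) =
      flagU M {0, 3} * flagU M {0, 1, 2} / (flagU M {0, 1} * flagU M {0, 2, 3}) := by
    rw [div_eq_div_iff (by positivity) (by positivity)]
    simp only [flagR_one, flagR_two, flagR_three, flagU_one, flagU_two, flagU_three, Fin.reduceLT,
      z10, z20, z21, z30, z31, z32]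
    ring
  rw [Lcal, LformBar, t1, t2, t3, t4]
  ring

lemma Lform_bar {p q : Finset (Fin 4) → ℝ} (h : ∀ I, q I = p (barSet I)) :
    Lform q = LformBar p ∧ LformBar q = Lform p := by
  simp only [Lform, LformBar, h, show barSet ({0} : Finset (Fin 4)) = {3} by decide,
    show barSet ({1} : Finset (Fin 4)) = {2} by decide,
    show barSet ({2} : Finset (Fin 4)) = {1} by decide,
    show barSet ({3} : Finset (Fin 4)) = {0} by decide,
    show barSet ({0, 1} : Finset (Fin 4)) = {2, 3} by decide,
    show barSet ({0, 2} : Finset (Fin 4)) = {1, 3} by decide,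
    show barSet ({0, 3} : Finset (Fin 4)) = {0, 3} by decide,
    show barSet ({1, 2} : Finset (Fin 4)) = {1, 2} by decide,
    show barSet ({1, 3} : Finset (Fin 4)) = {0, 2} by decide,
    show barSet ({2, 3} : Finset (Fin 4)) = {0, 1} by decide,
    show barSet ({0, 1, 2} : Finset (Fin 4)) = {1, 2, 3} by decide,
    show barSet ({0, 1, 3} : Finset (Fin 4)) = {0, 2, 3} by decide,
    show barSet ({0, 2, 3} : Finset (Fin 4)) = {0, 1, 3} by decide,
    show barSet ({1, 2, 3} : Finset (Fin 4)) = {0, 1, 2} by decide, and_self]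

/-- For every `G ∈ B_4^+`, `𝓛(Ǧ) = 𝓛(Ĝ) = 4 - 𝓛(G)`. -/
theorem stmt_3 (G Gc Gh : Matrix (Fin 4) (Fin 4) ℝ) (hG : Bpos 4 G)
    (hGc : Bpos 4 Gc ∧ ∀ I : Finset (Fin 4), flagR Gc I = flagR G (barSet I))
    (hGh : Bpos 4 Gh ∧ ∀ J : Finset (Fin 4), flagU Gh J = flagU G (barSet J)) :
    Lcal Gc = 4 - Lcal G ∧ Lcal Gh = 4 - Lcal G := by
  constructor
  · have h := eight_term (posFlag_flagR hG) (plucker_flagR G)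
    rw [← (Lform_bar hGc.2).1] at h
    have e1 : Lcal G = Lform (flagR G) := rfl
    have e2 : Lcal Gc = Lform (flagR Gc) := rfl
    linarith
  · have h := eight_term (posFlag_flagU hG) (plucker_flagU G)
    rw [Lcal_eq_flagU hG, Lcal_eq_flagU hGh.1, (Lform_bar hGh.2).2]
    linarith

end
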